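/- Let a and a₃₀ be real numbers and for q ∈ ℝ consider the 3×3 real matrix M(q) = [[ (1/2)q·a₃₀(2a − a₃₀q), −2qa(a − a₃₀q), 0], [ (1/2)a₃₀(2a − a₃₀q), −2a(a − a₃₀q), 0], [0, 0, 3a² − 4a·a₃₀q + (3/4)a₃₀²q²]] (where the bottom-left entries may be arbitrary reals A₃₁, A₃₂ without affecting the claim, since the (1,3) and (2,3) entries vanish). Then the eigenvalues of M(q) are λ₁(q) = −2a² + 3a·a₃₀q − (1/2)a₃₀²q², λ₂(q) = 3a² − 4a·a₃₀q + (3/4)a₃₀²q², and 0. Moreover, if a ≠ 0 and a₃₀ ≠ 0, then at the three values q = 0, q = 2a/a₃₀, q = 6a/a₃₀ (the solutions of q(2a − a₃₀q)(6a − a₃₀q) = 0) one has respectively (λ₁, λ₂) = (−2a², 3a²), (2a², −2a²), (−2a², 6a²); in each case λ₁·λ₂ < 0, so each singular point is a hyperbolic saddle. -/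

import Mathlib

/-!
The field satisfies `u̇ = q ẇ`, where `ẇ = G_q` vanishes on the projective line `u = w = 0`. So in
`DX(0, 0, q)` the first row is `q` times the second, and both rows end in `0`. Hence the matrix is
block lower triangular: a rank-one `2 × 2` block, which contributes the eigenvalues `0` and its
trace, followed by a scalar. The trace and the scalar are homogeneous quadratic polynomials in
`(a, a₃₀ q)`, so along `a₃₀ q = t a` they are multiples of `a²`, and the singularities are
`t = 0, 2, 6`.
-/

section RankOneBlock

open Matrix Polynomial

variable {R m n : Type*} [CommRing R] [Fintype m] [DecidableEq m] [Fintype n] [DecidableEq n]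

lemma charpoly_vecMulVec_eq_X_pow_mul [Nonempty m] (u v : m → R) :
    (vecMulVec u v).charpoly = X ^ (Fintype.card m - 1) * (X - C (u ⬝ᵥ v)) := by
  rw [charpoly_vecMulVec, smul_eq_C_mul, mul_sub, ← pow_succ, Nat.sub_add_cancel Fintype.card_pos,
    mul_comm (C _)]

lemma charpoly_fromBlocks_vecMulVec_zero₁₂ [Nonempty m] (u v : m → R) (B : Matrix n m R)
    (D : Matrix n n R) :
    (fromBlocks (vecMulVec u v) 0 B D).charpoly =
      X ^ (Fintype.card m - 1) * (X - C (u ⬝ᵥ v)) * D.charpoly := by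
  rw [charpoly_fromBlocks_zero₁₂, charpoly_vecMulVec_eq_X_pow_mul]

end RankOneBlock

section Eigenvalues

variable {K : Type*} [Field K]

/-- The eigenvalue `λ₁(q)` of the Jacobian `DX(0, 0, q)` of the Lie–Cartan field in a direction
transverse to the projective line. -/
def transverseEigenvalue (a a₃₀ q : K) : K :=
  -2 * a ^ 2 + 3 * a * a₃₀ * q - (1 / 2) * a₃₀ ^ 2 * q ^ 2

/-- The eigenvalue `λ₂(q)` of the Jacobian `DX(0, 0, q)` of the Lie–Cartan field in the direction of
the projective line itself. -/
def projectiveEigenvalue (a a₃₀ q : K) : K :=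
  3 * a ^ 2 - 4 * a * a₃₀ * q + (3 / 4) * a₃₀ ^ 2 * q ^ 2

lemma transverseEigenvalue_of_mul_eq {a a₃₀ q t : K} (h : a₃₀ * q = t * a) :
    transverseEigenvalue a a₃₀ q = (-2 + 3 * t - (1 / 2) * t ^ 2) * a ^ 2 := by
  rw [transverseEigenvalue]
  linear_combination (3 * a - (1 / 2) * (a₃₀ * q + t * a)) * h

lemma projectiveEigenvalue_of_mul_eq {a a₃₀ q t : K} (h : a₃₀ * q = t * a) :
    projectiveEigenvalue a a₃₀ q = (3 - 4 * t + (3 / 4) * t ^ 2) * a ^ 2 := by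
  rw [projectiveEigenvalue]
  linear_combination (-4 * a + (3 / 4) * (a₃₀ * q + t * a)) * h

lemma mul_sub_mul_mul_sub_mul_eq_zero_iff {b : K} (hb : b ≠ 0) (c d q : K) :
    q * (c - b * q) * (d - b * q) = 0 ↔ q = 0 ∨ q = c / b ∨ q = d / b := by
  have sub_mul_eq_zero_iff (e : K) : e - b * q = 0 ↔ q = e / b := by
    rw [sub_eq_zero, eq_div_iff hb, mul_comm, eq_comm]
  rw [mul_eq_zero, mul_eq_zero, or_assoc, sub_mul_eq_zero_iff, sub_mul_eq_zero_iff]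

end Eigenvalues

section Jacobian

open Matrix Polynomial

variable {K : Type*} [Field K]

/-- The Jacobian `DX(0, 0, q)` of the Lie–Cartan field in the coordinates `(u, w, q)`. The entries
`A₃₁`, `A₃₂`, which involve further coefficients of the surface, are left as parameters. -/
def lieCartanJacobian (a a₃₀ A₃₁ A₃₂ q : K) : Matrix (Fin 3) (Fin 3) K :=
  !![(1 / 2) * q * a₃₀ * (2 * a - a₃₀ * q), -2 * q * a * (a - a₃₀ * q), 0;
     (1 / 2) * a₃₀ * (2 * a - a₃₀ * q), -2 * a * (a - a₃₀ * q), 0;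
     A₃₁, A₃₂, 3 * a ^ 2 - 4 * a * a₃₀ * q + (3 / 4) * a₃₀ ^ 2 * q ^ 2]

lemma lieCartanJacobian_eq_reindex_fromBlocks (a a₃₀ A₃₁ A₃₂ q : K) :
    lieCartanJacobian a a₃₀ A₃₁ A₃₂ q =
      reindex finSumFinEquiv finSumFinEquiv
        (fromBlocks
          (vecMulVec ![q, 1] ![(1 / 2) * a₃₀ * (2 * a - a₃₀ * q), -2 * a * (a - a₃₀ * q)]) 0
          !![A₃₁, A₃₂] !![projectiveEigenvalue a a₃₀ q]) := by
  rw [← Equiv.symm_apply_eq]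
  ext (i | i) (j | j) <;> fin_cases i <;> fin_cases j <;>
    simp [lieCartanJacobian, projectiveEigenvalue, finSumFinEquiv] <;> ring

lemma dotProduct_eq_transverseEigenvalue [NeZero (2 : K)] (a a₃₀ q : K) :
    ![q, 1] ⬝ᵥ ![(1 / 2) * a₃₀ * (2 * a - a₃₀ * q), -2 * a * (a - a₃₀ * q)] =
      transverseEigenvalue a a₃₀ q := by
  have half_mul_two : (1 / 2 : K) * 2 = 1 := div_mul_cancel₀ 1 two_ne_zero
  rw [vec2_dotProduct', transverseEigenvalue]
  linear_combination a * a₃₀ * q * half_mul_two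

theorem charpoly_lieCartanJacobian [NeZero (2 : K)] (a a₃₀ A₃₁ A₃₂ q : K) :
    (lieCartanJacobian a a₃₀ A₃₁ A₃₂ q).charpoly =
      X * (X - C (transverseEigenvalue a a₃₀ q)) * (X - C (projectiveEigenvalue a a₃₀ q)) := by
  rw [lieCartanJacobian_eq_reindex_fromBlocks, charpoly_reindex,
    charpoly_fromBlocks_vecMulVec_zero₁₂, dotProduct_eq_transverseEigenvalue]
  simp [charpoly]

end Jacobian

section Hyperbolicity

lemma mul_sq_mul_mul_sq_neg {R : Type*} [CommRing R] [LinearOrder R] [IsStrictOrderedRing R]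
    {k l a : R} (hkl : k * l < 0) (ha : a ≠ 0) : k * a ^ 2 * (l * a ^ 2) < 0 := by
  rw [mul_mul_mul_comm]
  exact mul_neg_of_neg_of_pos hkl (by positivity)

variable {K : Type*} [Field K] [LinearOrder K] [IsStrictOrderedRing K]

theorem stmt_11_general (a a₃₀ : K) (A₃₁ A₃₂ : K → K) :
    (∀ q : K, (lieCartanJacobian a a₃₀ (A₃₁ q) (A₃₂ q) q).charpoly =
      Polynomial.X * (Polynomial.X - Polynomial.C (transverseEigenvalue a a₃₀ q)) *
        (Polynomial.X - Polynomial.C (projectiveEigenvalue a a₃₀ q))) ∧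
    (a ≠ 0 → a₃₀ ≠ 0 →
      (∀ q : K, q * (2 * a - a₃₀ * q) * (6 * a - a₃₀ * q) = 0 ↔
        q = 0 ∨ q = 2 * a / a₃₀ ∨ q = 6 * a / a₃₀) ∧
      transverseEigenvalue a a₃₀ 0 = -2 * a ^ 2 ∧
      projectiveEigenvalue a a₃₀ 0 = 3 * a ^ 2 ∧
      transverseEigenvalue a a₃₀ (2 * a / a₃₀) = 2 * a ^ 2 ∧
      projectiveEigenvalue a a₃₀ (2 * a / a₃₀) = -2 * a ^ 2 ∧
      transverseEigenvalue a a₃₀ (6 * a / a₃₀) = -2 * a ^ 2 ∧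
      projectiveEigenvalue a a₃₀ (6 * a / a₃₀) = 6 * a ^ 2 ∧
      transverseEigenvalue a a₃₀ 0 * projectiveEigenvalue a a₃₀ 0 < 0 ∧
      transverseEigenvalue a a₃₀ (2 * a / a₃₀) * projectiveEigenvalue a a₃₀ (2 * a / a₃₀) < 0 ∧
      transverseEigenvalue a a₃₀ (6 * a / a₃₀) * projectiveEigenvalue a a₃₀ (6 * a / a₃₀) < 0) := by
  refine ⟨fun q => charpoly_lieCartanJacobian a a₃₀ (A₃₁ q) (A₃₂ q) q, fun ha ha₃₀ => ?_⟩
  have at_zero : a₃₀ * 0 = 0 * a := by rw [mul_zero, zero_mul]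
  have at_two : a₃₀ * (2 * a / a₃₀) = 2 * a := mul_div_cancel₀ (2 * a) ha₃₀
  have at_six : a₃₀ * (6 * a / a₃₀) = 6 * a := mul_div_cancel₀ (6 * a) ha₃₀
  rw [transverseEigenvalue_of_mul_eq at_zero, projectiveEigenvalue_of_mul_eq at_zero,
    transverseEigenvalue_of_mul_eq at_two, projectiveEigenvalue_of_mul_eq at_two,
    transverseEigenvalue_of_mul_eq at_six, projectiveEigenvalue_of_mul_eq at_six]
  refine ⟨mul_sub_mul_mul_sub_mul_eq_zero_iff ha₃₀ (2 * a) (6 * a), ?_, ?_, ?_, ?_, ?_, ?_,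
    mul_sq_mul_mul_sq_neg ?_ ha, mul_sq_mul_mul_sq_neg ?_ ha, mul_sq_mul_mul_sq_neg ?_ ha⟩
  all_goals norm_num

end Hyperbolicity

/-- the Jacobian matrix of the Lie–Cartan field along the projective line at
a saddle critical end point has eigenvalues `λ₁(q), λ₂(q), 0` (independently of the
bottom-left entries `A₃₁, A₃₂`), and at the three singular values
`q = 0, 2a/a₃₀, 6a/a₃₀` one has `λ₁·λ₂ < 0`: hyperbolic saddles. -/
theorem stmt_11 (a a30 A31 A32 : ℝ)
    (M : ℝ → Matrix (Fin 3) (Fin 3) ℝ)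
    (hM : M = fun q =>
      !![(1 / 2) * q * a30 * (2 * a - a30 * q), -2 * q * a * (a - a30 * q), 0;
         (1 / 2) * a30 * (2 * a - a30 * q), -2 * a * (a - a30 * q), 0;
         A31, A32, 3 * a ^ 2 - 4 * a * a30 * q + (3 / 4) * a30 ^ 2 * q ^ 2])
    (lam1 lam2 : ℝ → ℝ)
    (h1 : lam1 = fun q => -2 * a ^ 2 + 3 * a * a30 * q - (1 / 2) * a30 ^ 2 * q ^ 2)
    (h2 : lam2 = fun q => 3 * a ^ 2 - 4 * a * a30 * q + (3 / 4) * a30 ^ 2 * q ^ 2) :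
    (∀ q : ℝ, (M q).charpoly =
      Polynomial.X * (Polynomial.X - Polynomial.C (lam1 q)) *
        (Polynomial.X - Polynomial.C (lam2 q))) ∧
    (a ≠ 0 → a30 ≠ 0 →
      (∀ q : ℝ, q * (2 * a - a30 * q) * (6 * a - a30 * q) = 0 ↔
        q = 0 ∨ q = 2 * a / a30 ∨ q = 6 * a / a30) ∧
      lam1 0 = -2 * a ^ 2 ∧ lam2 0 = 3 * a ^ 2 ∧
      lam1 (2 * a / a30) = 2 * a ^ 2 ∧ lam2 (2 * a / a30) = -2 * a ^ 2 ∧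
      lam1 (6 * a / a30) = -2 * a ^ 2 ∧ lam2 (6 * a / a30) = 6 * a ^ 2 ∧
      lam1 0 * lam2 0 < 0 ∧
      lam1 (2 * a / a30) * lam2 (2 * a / a30) < 0 ∧
      lam1 (6 * a / a30) * lam2 (6 * a / a30) < 0) := by
  subst hM h1 h2
  exact stmt_11_general a a30 (fun _ => A31) (fun _ => A32)
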